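/- Let p ≥ 5 be a prime, and for a positive integer n let V_p(n) denote the set of positive integers not exceeding n whose least prime divisor is p. Then lim_{n→∞} ln(−∑_{j ∈ V_p(n)} (−1)^{s(j)}) / ln n = ln 3 / ln 4. -/

import Mathlib

open Finset Filter Topology

noncomputable section

/-- `s n` is the number of 1's in the binary expansion of `n`. -/
def s (n : ℕ) : ℕ := (Nat.digits 2 n).count 1

/-- `S m x = ∑_{0 ≤ n < x, m ∣ n} (-1)^(s n)`. -/
def S (m x : ℕ) : ℝ := ∑ n ∈ Finset.range x, if m ∣ n then (-1 : ℝ) ^ (s n) else 0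

/-- `F α N = ∑_{n=0}^{N-1} e^{2πi(αn + s(n)/2)}`. -/
def F (α : ℝ) (N : ℕ) : ℂ :=
  ∑ n ∈ Finset.range N, Complex.exp (2 * Real.pi * Complex.I * ((α : ℂ) * n + (s n : ℂ) / 2))

/-- `bsq m = b_m ^ 2`, defined by cases on `m mod 3`. -/
def bsq (m : ℕ) : ℝ :=
  if m % 3 = 0 then
    Real.sin (Real.pi / 3 * (1 + 3 / m)) * (Real.sqrt 3 - Real.sin (Real.pi / 3 * (1 + 3 / m)))
  else if m % 3 = 1 then
    Real.sin (Real.pi / 3 * (1 - 1 / m)) * (Real.sqrt 3 - Real.sin (Real.pi / 3 * (1 - 1 / m)))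
  else
    Real.sin (Real.pi / 3 * (1 + 1 / m)) * (Real.sqrt 3 - Real.sin (Real.pi / 3 * (1 + 1 / m)))

/-- `b m` is the positive real number with `(b m)^2 = bsq m`. -/
def b (m : ℕ) : ℝ := Real.sqrt (bsq m)

/-- `lam m = λ_m = 1 + log₂ b_m`. -/
def lam (m : ℕ) : ℝ := 1 + Real.logb 2 (b m)

/-- `mu m = μ_m = (2 b_m + 1)/(2 b_m - 1)`. -/
def mu (m : ℕ) : ℝ := (2 * b m + 1) / (2 * b m - 1)

/-- `U m x`: positive integers `≤ x` divisible by `m` and not by 3. -/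
def U (m x : ℕ) : Finset ℕ := (Finset.Icc 1 x).filter (fun n => m ∣ n ∧ ¬ (3 ∣ n))

/-- `V p n`: positive integers `≤ n` whose least prime divisor is `p`. -/
def V (p n : ℕ) : Finset ℕ := (Finset.Icc 1 n).filter (fun j => Nat.minFac j = p)

/-- The exponent `log 3 / log 4` governing Newman's sums. -/
def newmanExponent : ℝ := Real.log 3 / Real.log 4

lemma newmanExponent_pos : 0 < newmanExponent :=
  div_pos (Real.log_pos (by norm_num)) (Real.log_pos (by norm_num))

lemma four_rpow_newmanExponent : (4 : ℝ) ^ newmanExponent = 3 := by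
  rw [Real.rpow_def_of_pos (by norm_num), newmanExponent,
    mul_div_cancel₀ _ (Real.log_pos (by norm_num)).ne', Real.exp_log (by norm_num)]

lemma two_pow_rpow_newmanExponent_sq (r : ℕ) :
    (((2 ^ r : ℕ) : ℝ) ^ newmanExponent) ^ 2 = 3 ^ r := by
  rw [← four_rpow_newmanExponent, ← Real.rpow_natCast, ← Real.rpow_natCast,
    ← Real.rpow_mul (by positivity), ← Real.rpow_mul (by positivity), mul_comm, mul_comm _ (r : ℝ),
    Real.rpow_mul (by positivity), Real.rpow_mul (by positivity)]
  congr 1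
  push_cast
  rw [Real.rpow_natCast, Real.rpow_two, ← pow_mul, mul_comm, pow_mul]
  norm_num

/-- The Thue–Morse sign `(-1) ^ s n`. -/
def thueMorse (n : ℕ) : ℤ := (-1) ^ s n

lemma s_two_mul (n : ℕ) : s (2 * n) = s n := by
  rcases Nat.eq_zero_or_pos n with rfl | hn
  · rfl
  · have := Nat.digits_add 2 (by norm_num) 0 n (by norm_num) (Or.inr hn.ne')
    rw [zero_add] at this
    simp [s, this]

lemma s_two_mul_add_one (n : ℕ) : s (2 * n + 1) = s n + 1 := by
  have := Nat.digits_add 2 (by norm_num) 1 n (by norm_num) (Or.inl one_ne_zero)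
  rw [add_comm] at this
  rw [s, s, this, List.count_cons_self]

lemma thueMorse_two_mul (n : ℕ) : thueMorse (2 * n) = thueMorse n := by
  rw [thueMorse, s_two_mul, thueMorse]

lemma thueMorse_two_mul_add_one (n : ℕ) : thueMorse (2 * n + 1) = -thueMorse n := by
  rw [thueMorse, s_two_mul_add_one, thueMorse, pow_succ, mul_neg_one]

lemma abs_thueMorse (n : ℕ) : |thueMorse n| = 1 := by
  simp [thueMorse]

lemma norm_thueMorse (n : ℕ) : ‖(thueMorse n : ℂ)‖ = 1 := by
  simp [thueMorse]

/-- The Thue–Morse exponential sum `∑_{j < N} (-1) ^ s j * z ^ j`. -/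
def thueMorseSum (z : ℂ) (N : ℕ) : ℂ := ∑ j ∈ range N, thueMorse j * z ^ j

lemma thueMorseSum_two_mul (z : ℂ) (N : ℕ) :
    thueMorseSum z (2 * N) = (1 - z) * thueMorseSum (z ^ 2) N := by
  induction N with
  | zero => simp [thueMorseSum]
  | succ N ih =>
    have h : thueMorseSum z (2 * (N + 1)) = thueMorseSum z (2 * N)
        + thueMorse (2 * N) * z ^ (2 * N) + thueMorse (2 * N + 1) * z ^ (2 * N + 1) := by
      simp only [thueMorseSum, mul_add, mul_one, sum_range_succ]
    rw [h, ih, thueMorse_two_mul, thueMorse_two_mul_add_one, thueMorseSum, thueMorseSum,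
      sum_range_succ]
    push_cast
    ring

lemma thueMorseSum_two_pow_mul (z : ℂ) (r N : ℕ) :
    thueMorseSum z (2 ^ r * N) =
      (∏ i ∈ range r, (1 - z ^ 2 ^ i)) * thueMorseSum (z ^ 2 ^ r) N := by
  induction r generalizing N with
  | zero => simp
  | succ r ih =>
    rw [pow_succ, mul_assoc, ih, thueMorseSum_two_mul, prod_range_succ, ← pow_mul]
    ring

lemma norm_thueMorseSum_add_le {z : ℂ} (hz : ‖z‖ = 1) (N k : ℕ) :
    ‖thueMorseSum z (N + k)‖ ≤ ‖thueMorseSum z N‖ + k := by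
  rw [thueMorseSum, sum_range_add]
  refine (norm_add_le _ _).trans (add_le_add_right ((norm_sum_le _ _).trans ?_) _)
  simp only [norm_mul, norm_thueMorse, norm_pow, hz, one_pow, mul_one, sum_const, card_range,
    nsmul_eq_mul, le_refl]

lemma normSq_one_sub_sq {z : ℂ} (hz : ‖z‖ = 1) :
    ‖1 - z ^ 2‖ ^ 2 = ‖1 - z‖ ^ 2 * (4 - ‖1 - z‖ ^ 2) := by
  have h1 : (1 : ℂ) - z ^ 2 = (1 - z) * (1 + z) := by ring
  have h2 := parallelogram_law_with_norm ℝ (1 : ℂ) z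
  rw [h1, norm_mul, mul_pow]
  congr 1
  simp only [norm_one, hz] at h2
  linarith

lemma sq_add_self_add_one_eq_zero_of_norm {z : ℂ} (hz : ‖z‖ = 1) (h : ‖1 - z‖ ^ 2 = 3) :
    z ^ 2 + z + 1 = 0 := by
  have h1 : z.re * z.re + z.im * z.im = 1 := by
    rw [← Complex.normSq_apply, Complex.normSq_eq_norm_sq, hz, one_pow]
  rw [← Complex.normSq_eq_norm_sq, Complex.normSq_apply] at h
  simp only [Complex.sub_re, Complex.sub_im, Complex.one_re, Complex.one_im] at h
  have hre : z.re = -1 / 2 := by linarith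
  have him : z.im * z.im = 3 / 4 := by rw [hre] at h1; linarith
  apply Complex.ext
  · simp only [sq, Complex.add_re, Complex.mul_re, Complex.one_re, Complex.zero_re]
    rw [him, hre]; norm_num
  · simp only [sq, Complex.add_im, Complex.mul_im, Complex.one_im, Complex.zero_im]
    rw [hre]; ring

lemma cube_mul_four_sub_le (v : ℝ) : v ^ 3 * (4 - v) ≤ 27 := by
  nlinarith [mul_nonneg (sq_nonneg (v - 3)) (by nlinarith [sq_nonneg (v + 1)] :
    (0 : ℝ) ≤ v ^ 2 + 2 * v + 3)]

lemma cube_mul_four_sub_lt {v : ℝ} (hv : v ≠ 3) : v ^ 3 * (4 - v) < 27 := by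
  have h3 : 0 < (v - 3) ^ 2 := by have := sub_ne_zero.2 hv; positivity
  nlinarith [mul_pos h3 (by nlinarith [sq_nonneg (v + 1)] :
    (0 : ℝ) < v ^ 2 + 2 * v + 3)]

lemma norm_prod_one_sub_sq_lt {z : ℂ} (hz : ‖z‖ = 1) (hz3 : z ^ 2 + z + 1 ≠ 0) {r : ℕ}
    (hr : 0 < r) (hper : z ^ 2 ^ r = z) :
    ‖∏ i ∈ range r, (1 - z ^ 2 ^ i)‖ ^ 2 < 3 ^ r := by
  set v : ℕ → ℝ := fun i => ‖1 - z ^ 2 ^ i‖ ^ 2 with hv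
  have hprod : ‖∏ i ∈ range r, (1 - z ^ 2 ^ i)‖ ^ 2 = ∏ i ∈ range r, v i := by
    rw [norm_prod, ← prod_pow]
  rw [hprod]
  have hv0 : ∀ i, 0 ≤ v i := fun i => sq_nonneg _
  by_cases hzero : ∃ i ∈ range r, v i = 0
  · rw [prod_eq_zero_iff.2 hzero]; positivity
  push Not at hzero
  have hvpos : ∀ i ∈ range r, 0 < v i := fun i hi => lt_of_le_of_ne (hv0 i) (hzero i hi).symm
  have hstep : ∀ i, v (i + 1) = v i * (4 - v i) := fun i => by
    simp only [hv]
    rw [pow_succ 2 i, pow_mul, normSq_one_sub_sq (by rw [norm_pow, hz, one_pow])]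
  have hcyc : ∏ i ∈ range r, v (i + 1) = ∏ i ∈ range r, v i := by
    have h1 := prod_range_succ v r
    rw [prod_range_succ'] at h1
    have h2 : v r = v 0 := by simp only [hv, hper, pow_zero, pow_one]
    rw [h2] at h1
    exact mul_right_cancel₀ (hzero 0 (mem_range.2 hr)) h1
  have hcube : (∏ i ∈ range r, v i) ^ 3 = ∏ i ∈ range r, v i ^ 3 * (4 - v i) := by
    rw [pow_succ]
    nth_rewrite 2 [← hcyc]
    rw [← prod_pow, ← prod_mul_distrib]
    exact prod_congr rfl fun i _ => by rw [hstep]; ring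
  have hlast : ∀ i ∈ range r, 0 < v (i + 1) := fun i hi => by
    rcases (Nat.succ_le_of_lt (mem_range.1 hi)).lt_or_eq with h | h
    · exact hvpos _ (mem_range.2 h)
    · have h2 : v (i + 1) = v 0 := by
        simp only [hv, ← Nat.succ_eq_add_one, h, hper, pow_zero, pow_one]
      rw [h2]; exact hvpos 0 (mem_range.2 hr)
  have hlt : ∏ i ∈ range r, v i ^ 3 * (4 - v i) < ∏ _i ∈ range r, (27 : ℝ) := by
    refine prod_lt_prod (fun i hi => ?_) (fun i _ => cube_mul_four_sub_le _)
      ⟨0, mem_range.2 hr, cube_mul_four_sub_lt fun h => hz3 ?_⟩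
    · have := hlast i hi
      rw [hstep] at this
      have := mul_pos (pow_pos (hvpos i hi) 2) this
      linarith [this, (by ring : v i ^ 3 * (4 - v i) = v i ^ 2 * (v i * (4 - v i)))]
    · exact sq_add_self_add_one_eq_zero_of_norm hz (by simpa [hv] using h)
  rw [← hcube, prod_const, card_range] at hlt
  refine lt_of_pow_lt_pow_left₀ 3 (by positivity) (hlt.trans_eq ?_)
  rw [← pow_mul, mul_comm, pow_mul]; norm_num

open Asymptotics in
lemma isLittleO_natCast_rpow {m a : ℝ} (h : m < a) :
    (fun N : ℕ => (N : ℝ) ^ m) =o[atTop] fun N : ℕ => (N : ℝ) ^ a := by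
  refine (isLittleO_iff_tendsto' ?_).2 (((tendsto_rpow_neg_atTop (sub_pos.2 h)).comp
    tendsto_natCast_atTop_atTop).congr' ?_)
  · filter_upwards [eventually_gt_atTop 0] with N hN h0
    have : (0 : ℝ) < N := by exact_mod_cast hN
    exact absurd h0 (by positivity)
  · filter_upwards [eventually_gt_atTop 0] with N hN
    have : (0 : ℝ) < N := by exact_mod_cast hN
    rw [Function.comp_apply, neg_sub, Real.rpow_sub this]

open Asymptotics in
/-- A sequence satisfying `f N ≤ q * f (N / R) + R` with `q < R ^ a` is `o(N ^ a)`. -/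
lemma isLittleO_rpow_of_le_mul_div_add {f : ℕ → ℝ} {R : ℕ} {q a : ℝ} (hf : ∀ N, 0 ≤ f N)
    (hfle : ∀ N, f N ≤ N) (hR : 1 < R) (ha : 0 < a) (hq0 : 0 ≤ q) (hq : q < (R : ℝ) ^ a)
    (hrec : ∀ N, f N ≤ q * f (N / R) + R) :
    f =o[atTop] fun N : ℕ => (N : ℝ) ^ a := by
  have hR1 : (1 : ℝ) < R := by exact_mod_cast hR
  have hR0 : (0 : ℝ) < R := by linarith
  obtain ⟨ρ, hρ, hρa⟩ := exists_between (max_lt hq (Real.one_lt_rpow hR1 ha))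
  obtain ⟨hqρ, h1ρ⟩ := max_lt_iff.1 hρ
  have hρ0 : 0 < ρ := by linarith
  set m := Real.logb R ρ with hm
  have hm0 : 0 < m := Real.logb_pos hR1 h1ρ
  have hRm : (R : ℝ) ^ m = ρ := Real.rpow_logb hR0 hR1.ne' hρ0
  have hma : m < a := by rwa [hm, Real.logb_lt_iff_lt_rpow hR1 hρ0]
  set C : ℝ := R * ρ / (ρ - q) with hC
  have hCq : q * C + R * ρ = C * ρ := by
    have : ρ - q ≠ 0 := by linarith
    rw [hC]; field_simp; ring
  have hCR : (R : ℝ) ≤ C := by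
    rw [hC, le_div_iff₀ (by linarith)]; nlinarith
  have hbound : ∀ N : ℕ, 1 ≤ N → f N ≤ C * (N : ℝ) ^ m := by
    intro N
    induction N using Nat.strong_induction_on with
    | _ N ih =>
      intro hN
      have hN1 : (1 : ℝ) ≤ (N : ℝ) ^ m := Real.one_le_rpow (by exact_mod_cast hN) hm0.le
      rcases lt_or_ge N R with hNR | hNR
      · have : (N : ℝ) ≤ R := by exact_mod_cast hNR.le
        nlinarith [hfle N]
      · have h1 := ih (N / R) (Nat.div_lt_self hN hR) (Nat.div_pos hNR (by omega))
        have h2 : ((N / R : ℕ) : ℝ) ^ m * ρ ≤ (N : ℝ) ^ m := by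
          rw [← hRm, ← Real.mul_rpow (by positivity) (by positivity)]
          exact Real.rpow_le_rpow (by positivity)
            (by exact_mod_cast Nat.div_mul_le_self N R) hm0.le
        have h3 := mul_le_mul_of_nonneg_left h1 hq0
        have h4 : f N * ρ ≤ C * (N : ℝ) ^ m * ρ := by
          calc f N * ρ ≤ (q * (C * ((N / R : ℕ) : ℝ) ^ m) + R) * ρ := by
                gcongr; linarith [hrec N]
            _ = q * C * (((N / R : ℕ) : ℝ) ^ m * ρ) + R * ρ * 1 := by ring
            _ ≤ q * C * (N : ℝ) ^ m + R * ρ * (N : ℝ) ^ m := by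
                have : 0 ≤ C := hR0.le.trans hCR
                gcongr
            _ = C * (N : ℝ) ^ m * ρ := by rw [← add_mul, hCq]; ring
        exact le_of_mul_le_mul_right h4 hρ0
  refine IsBigO.trans_isLittleO (g := fun N : ℕ => (N : ℝ) ^ m) (IsBigO.of_bound C ?_)
    (isLittleO_natCast_rpow hma)
  filter_upwards [eventually_ge_atTop 1] with N hN
  rw [Real.norm_of_nonneg (hf N), Real.norm_of_nonneg (by positivity)]
  exact hbound N hN

open Asymptotics in
lemma thueMorseSum_isLittleO {z : ℂ} {Q : ℕ} (hQ : Odd Q) (hzQ : z ^ Q = 1)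
    (hz3 : z ^ 2 + z + 1 ≠ 0) :
    thueMorseSum z =o[atTop] fun N : ℕ => (N : ℝ) ^ newmanExponent := by
  have hz : ‖z‖ = 1 := Complex.norm_eq_one_of_pow_eq_one hzQ hQ.pos.ne'
  set r := Nat.totient Q with hrdef
  have hr : 0 < r := Nat.totient_pos.2 hQ.pos
  have hper : z ^ 2 ^ r = z := by
    have h := Nat.ModEq.pow_totient (Nat.coprime_two_left.2 hQ)
    have h' := (pow_eq_pow_of_modEq h hzQ)
    rwa [pow_one] at h'
  refine IsLittleO.of_norm_left (isLittleO_rpow_of_le_mul_div_add (R := 2 ^ r)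
    (q := ‖∏ i ∈ range r, (1 - z ^ 2 ^ i)‖) (fun _ => norm_nonneg _) (fun N => ?_)
    (Nat.one_lt_two_pow hr.ne') newmanExponent_pos (norm_nonneg _) ?_ fun N => ?_)
  · simpa [thueMorseSum] using norm_thueMorseSum_add_le hz 0 N
  · refine lt_of_pow_lt_pow_left₀ 2 (by positivity) ?_
    rw [two_pow_rpow_newmanExponent_sq]
    exact norm_prod_one_sub_sq_lt hz hz3 hr hper
  · have h := norm_thueMorseSum_add_le hz (2 ^ r * (N / 2 ^ r)) (N % 2 ^ r)
    rw [Nat.div_add_mod, thueMorseSum_two_pow_mul, hper, norm_mul] at h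
    have : ((N % 2 ^ r : ℕ) : ℝ) ≤ (2 ^ r : ℕ) := by
      exact_mod_cast (Nat.mod_lt _ (by positivity)).le
    linarith

lemma sum_range_two_mul_thueMorse (N : ℕ) : ∑ j ∈ range (2 * N), thueMorse j = 0 := by
  induction N with
  | zero => simp
  | succ N ih =>
    rw [mul_add, mul_one, sum_range_succ, sum_range_succ, ih, thueMorse_two_mul,
      thueMorse_two_mul_add_one]
    ring

lemma abs_sum_range_thueMorse_le (N : ℕ) : |∑ j ∈ range N, thueMorse j| ≤ 1 := by
  obtain ⟨k, rfl | rfl⟩ := N.even_or_odd'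
  · simp [sum_range_two_mul_thueMorse]
  · rw [sum_range_succ, sum_range_two_mul_thueMorse, zero_add, abs_thueMorse]

/-- The excess of negative over positive Thue–Morse signs among the `j < N`, `j ≡ 1 (mod 3)`. -/
def newmanSum (N : ℕ) : ℤ := -∑ j ∈ range N, if j % 3 = 1 then thueMorse j else 0

lemma newmanSum_succ (N : ℕ) :
    newmanSum (N + 1) = newmanSum N - if N % 3 = 1 then thueMorse N else 0 := by
  rw [newmanSum, newmanSum, sum_range_succ]; ring

lemma newmanSum_four_mul (N : ℕ) :
    newmanSum (4 * N) = 3 * newmanSum N + ∑ j ∈ range N, thueMorse j := by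
  induction N with
  | zero => simp [newmanSum]
  | succ N ih =>
    have h0 : thueMorse (4 * N) = thueMorse N := by
      rw [show 4 * N = 2 * (2 * N) by ring, thueMorse_two_mul, thueMorse_two_mul]
    have h1 : thueMorse (4 * N + 1) = -thueMorse N := by
      rw [show 4 * N + 1 = 2 * (2 * N) + 1 by ring, thueMorse_two_mul_add_one, thueMorse_two_mul]
    have h2 : thueMorse (4 * N + 2) = -thueMorse N := by
      rw [show 4 * N + 2 = 2 * (2 * N + 1) by ring, thueMorse_two_mul, thueMorse_two_mul_add_one]
    have h3 : thueMorse (4 * N + 3) = thueMorse N := by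
      rw [show 4 * N + 3 = 2 * (2 * N + 1) + 1 by ring, thueMorse_two_mul_add_one,
        thueMorse_two_mul_add_one, neg_neg]
    rw [show 4 * (N + 1) = 4 * N + 3 + 1 by ring, newmanSum_succ, newmanSum_succ,
      newmanSum_succ, newmanSum_succ, ih, newmanSum_succ, sum_range_succ, h0, h1, h2, h3]
    split_ifs <;> omega

lemma abs_newmanSum_add_sub_le (N : ℕ) {e : ℕ} (he : e < 4) :
    |newmanSum (N + e) - newmanSum N| ≤ 1 := by
  have h0 := abs_le.1 (abs_thueMorse N).le
  have h1 := abs_le.1 (abs_thueMorse (N + 1)).le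
  have h2 := abs_le.1 (abs_thueMorse (N + 2)).le
  rw [abs_le]
  interval_cases e
  · simp
  · rw [newmanSum_succ]; split_ifs <;> constructor <;> omega
  · rw [newmanSum_succ (N + 1), newmanSum_succ]; split_ifs <;> constructor <;> omega
  · rw [newmanSum_succ (N + 2), newmanSum_succ (N + 1), newmanSum_succ]
    split_ifs <;> constructor <;> omega

lemma abs_newmanSum_sub_three_mul_le (N : ℕ) :
    |newmanSum N - 3 * newmanSum (N / 4)| ≤ 2 := by
  have h1 := abs_le.1 (abs_newmanSum_add_sub_le (4 * (N / 4)) (Nat.mod_lt N (by norm_num : 4 > 0)))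
  have h2 := abs_le.1 (abs_sum_range_thueMorse_le (N / 4))
  rw [Nat.div_add_mod, newmanSum_four_mul] at h1
  rw [abs_le]
  constructor <;> linarith [h1.1, h1.2, h2.1, h2.2]

lemma two_le_newmanSum {N : ℕ} (h5 : 5 ≤ N) (h20 : N < 20) : 2 ≤ newmanSum N := by
  interval_cases N <;> simp [newmanSum, sum_range_succ, thueMorse, s]

lemma exists_mul_rpow_le_newmanSum :
    ∃ c : ℝ, 0 < c ∧ ∀ N : ℕ, 5 ≤ N → c * (N : ℝ) ^ newmanExponent ≤ newmanSum N - 1 := by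
  have hpos := newmanExponent_pos.le
  refine ⟨((20 : ℝ) ^ newmanExponent)⁻¹, by positivity, fun N hN => ?_⟩
  suffices h : ((20 : ℝ) ^ newmanExponent)⁻¹ * ((N : ℝ) + 1) ^ newmanExponent
      ≤ newmanSum N - 1 by
    refine le_trans ?_ h
    gcongr
    linarith
  induction N using Nat.strong_induction_on with
  | _ N ih =>
    rcases lt_or_ge N 20 with h20 | h20
    · have h2 : (2 : ℝ) ≤ newmanSum N := by exact_mod_cast two_le_newmanSum hN h20
      have h3 : ((N : ℝ) + 1) ≤ 20 := by exact_mod_cast h20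
      have h4 : ((20 : ℝ) ^ newmanExponent)⁻¹ * ((N : ℝ) + 1) ^ newmanExponent ≤ 1 := by
        rw [inv_mul_le_one₀ (by positivity)]
        gcongr
      linarith
    · have h1 := ih (N / 4) (by omega) (by omega)
      have h2 : (3 * newmanSum (N / 4) - 2 : ℝ) ≤ newmanSum N := by
        have := (abs_le.1 (abs_newmanSum_sub_three_mul_le N)).1
        exact_mod_cast (by linarith : 3 * newmanSum (N / 4) - 2 ≤ newmanSum N)
      have h3 : ((N : ℝ) + 1) ^ newmanExponent ≤
          3 * (((N / 4 : ℕ) : ℝ) + 1) ^ newmanExponent := by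
        rw [← four_rpow_newmanExponent, ← Real.mul_rpow (by positivity) (by positivity)]
        gcongr
        exact_mod_cast (by omega : N + 1 ≤ 4 * (N / 4 + 1))
      have h4 : (0 : ℝ) ≤ ((20 : ℝ) ^ newmanExponent)⁻¹ := by positivity
      nlinarith [mul_le_mul_of_nonneg_left h3 h4]

lemma newmanSum_add_one_le {N : ℕ} (hN : 1 ≤ N) :
    (newmanSum N : ℝ) + 1 ≤ 2 * (N : ℝ) ^ newmanExponent := by
  have hpos := newmanExponent_pos.le
  induction N using Nat.strong_induction_on with
  | _ N ih =>
    rcases lt_or_ge N 4 with h4 | h4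
    · have h1 : (newmanSum N : ℝ) ≤ 1 := by
        have h := (abs_le.1 (abs_newmanSum_add_sub_le 0 h4)).2
        rw [zero_add, show newmanSum 0 = 0 by simp [newmanSum], sub_zero] at h
        exact_mod_cast h
      have h2 : (1 : ℝ) ≤ (N : ℝ) ^ newmanExponent :=
        Real.one_le_rpow (by exact_mod_cast hN) hpos
      linarith
    · have h1 := ih (N / 4) (by omega) (by omega)
      have h2 : (newmanSum N : ℝ) ≤ 3 * newmanSum (N / 4) + 2 := by
        have := (abs_le.1 (abs_newmanSum_sub_three_mul_le N)).2
        exact_mod_cast (by linarith : newmanSum N ≤ 3 * newmanSum (N / 4) + 2)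
      have h3 : 3 * ((N / 4 : ℕ) : ℝ) ^ newmanExponent ≤ (N : ℝ) ^ newmanExponent := by
        rw [← four_rpow_newmanExponent, ← Real.mul_rpow (by positivity) (by positivity)]
        gcongr
        exact_mod_cast (by omega : 4 * (N / 4) ≤ N)
      linarith

lemma sum_thueMorse_mul_eq_sum_dft {Q : ℕ} [NeZero Q] (f : ZMod Q → ℂ) (N : ℕ) :
    ∑ n ∈ range N, (thueMorse n : ℂ) * f n =
      (Q : ℂ)⁻¹ * ∑ l : ZMod Q, ZMod.dft f l * thueMorseSum (ZMod.stdAddChar l) N := by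
  have hf : ∀ n : ℕ, f n =
      (Q : ℂ)⁻¹ * ∑ l : ZMod Q, ZMod.stdAddChar l ^ n * ZMod.dft f l := fun n => by
    conv_lhs => rw [← ZMod.dft.symm_apply_apply f]
    rw [ZMod.invDFT_apply, smul_eq_mul]
    congr 1
    refine sum_congr rfl fun l _ => ?_
    rw [smul_eq_mul, ← AddChar.map_nsmul_eq_pow, nsmul_eq_mul, mul_comm l]
  simp only [hf, thueMorseSum, mul_sum]
  rw [sum_comm]
  exact sum_congr rfl fun l _ => sum_congr rfl fun n _ => by ring

lemma dft_eq_zero_of_cube_root {Q : ℕ} [NeZero Q] {f : ZMod Q → ℂ}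
    (hsymm : ∀ x, f (-1 - x) = f x) (hsupp : ∀ x, x.val % 3 = 1 → f x = 0)
    (hsum : ∑ x, f x = 0) {l : ZMod Q}
    (hl : (ZMod.stdAddChar l : ℂ) ^ 2 + ZMod.stdAddChar l + 1 = 0) : ZMod.dft f l = 0 := by
  set z : ℂ := ZMod.stdAddChar l with hz
  have hz3 : z ^ 3 = 1 := by linear_combination (z - 1) * hl
  have hz0 : z ≠ 0 := fun h => by simp [h] at hl
  have hchar : ∀ x : ZMod Q, (ZMod.stdAddChar (x * l) : ℂ) = z ^ x.val := fun x => by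
    rw [hz, ← AddChar.map_nsmul_eq_pow, nsmul_eq_mul, ZMod.natCast_zmod_val]
  have hdft : ZMod.dft f l = ∑ x, ZMod.stdAddChar (-(x * l)) * f x := by
    simp [ZMod.dft_apply]
  have hrefl : ZMod.dft f l = ∑ x, ZMod.stdAddChar (l + x * l) * f x := by
    rw [hdft, ← (Equiv.subLeft (-1 : ZMod Q)).sum_comp]
    refine sum_congr rfl fun x _ => ?_
    rw [Equiv.subLeft_apply, hsymm]
    congr 2
    ring
  have hterm : ∀ x, (ZMod.stdAddChar (-(x * l)) + ZMod.stdAddChar (l + x * l)) * f x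
      = (1 + z) * f x := fun x => by
    rcases eq_or_ne (x.val % 3) 1 with h1 | h1
    · rw [hsupp x h1, mul_zero, mul_zero]
    · congr 1
      rw [AddChar.map_neg_eq_inv, AddChar.map_add_eq_mul, hchar, ← hz,
        ← Nat.div_add_mod x.val 3, pow_add, pow_mul, hz3, one_pow, one_mul]
      have h02 : x.val % 3 = 0 ∨ x.val % 3 = 2 := by omega
      rcases h02 with h | h
      · rw [h]; simp
      · rw [h]
        field_simp
        linear_combination (z ^ 2 - 1) * hz3
  have h2 : 2 * ZMod.dft f l = 0 := by
    rw [two_mul]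
    nth_rewrite 1 [hdft]
    rw [hrefl, ← sum_add_distrib]
    simp only [← add_mul, hterm]
    rw [← mul_sum, hsum, mul_zero]
  exact (mul_eq_zero.1 h2).resolve_left two_ne_zero

open Asymptotics in
lemma sum_thueMorse_mul_isLittleO {Q : ℕ} [NeZero Q] (hQ : Odd Q) {f : ZMod Q → ℂ}
    (hsymm : ∀ x, f (-1 - x) = f x) (hsupp : ∀ x, x.val % 3 = 1 → f x = 0)
    (hsum : ∑ x, f x = 0) :
    (fun N : ℕ => ∑ n ∈ range N, (thueMorse n : ℂ) * f n)
      =o[atTop] fun N : ℕ => (N : ℝ) ^ newmanExponent := by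
  simp only [sum_thueMorse_mul_eq_sum_dft]
  refine IsLittleO.const_mul_left (IsLittleO.fun_sum fun l _ => ?_) _
  by_cases hl : (ZMod.stdAddChar l : ℂ) ^ 2 + ZMod.stdAddChar l + 1 = 0
  · simp only [dft_eq_zero_of_cube_root hsymm hsupp hsum hl, zero_mul]
    exact isLittleO_zero _ _
  · refine (thueMorseSum_isLittleO hQ ?_ hl).const_mul_left _
    rw [← AddChar.map_nsmul_eq_pow, nsmul_eq_mul, ZMod.natCast_self, zero_mul,
      AddChar.map_zero_eq_one]

/-- `m` is divisible by `p` but by no odd `q` with `3 ≤ q < p`. -/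
def HasLeastOddFactor (p : ℕ) (m : ℤ) : Prop :=
  (p : ℤ) ∣ m ∧ ∀ q : ℕ, 3 ≤ q → q < p → Odd q → ¬(q : ℤ) ∣ m

lemma HasLeastOddFactor.neg {p : ℕ} {m : ℤ} (h : HasLeastOddFactor p m) :
    HasLeastOddFactor p (-m) :=
  ⟨(dvd_neg).2 h.1, fun q h3 hq ho hd => h.2 q h3 hq ho ((dvd_neg).1 hd)⟩

lemma minFac_two_mul_add_one_eq_iff {p : ℕ} (hp : p.Prime) (hp5 : 5 ≤ p) (k : ℕ) :
    (2 * k + 1).minFac = p ↔ HasLeastOddFactor p (2 * k + 1) := by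
  have hcast : ((2 * k + 1 : ℕ) : ℤ) = 2 * k + 1 := by push_cast; rfl
  rw [HasLeastOddFactor, ← hcast]
  simp only [Int.natCast_dvd_natCast]
  constructor
  · rintro rfl
    exact ⟨Nat.minFac_dvd _, fun q h3 hq _ hd =>
      absurd (Nat.minFac_le_of_dvd (by omega) hd) (by omega)⟩
  · rintro ⟨hd, hmin⟩
    refine le_antisymm (Nat.minFac_le_of_dvd hp.two_le hd) (not_lt.1 fun hlt => ?_)
    have h1 : 2 * k + 1 ≠ 1 := fun h => by
      rw [h, Nat.dvd_one] at hd; omega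
    have hodd : Odd (2 * k + 1).minFac := Odd.of_dvd_nat ⟨k, rfl⟩ (Nat.minFac_dvd _)
    have h2 := (Nat.minFac_prime h1).two_le
    obtain ⟨a, ha⟩ := hodd
    exact hmin _ (by omega) hlt ⟨a, ha⟩ (Nat.minFac_dvd _)

/-- The product of the first `p` odd numbers. -/
def oddProd (p : ℕ) : ℕ := ∏ i ∈ range p, (2 * i + 1)

lemma odd_oddProd (p : ℕ) : Odd (oddProd p) :=
  prod_induction _ Odd (fun _ _ => Odd.mul) odd_one fun i _ => ⟨i, rfl⟩

instance neZero_oddProd (p : ℕ) : NeZero (oddProd p) := ⟨(odd_oddProd p).pos.ne'⟩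

lemma dvd_oddProd {p q : ℕ} (hq : Odd q) (hqp : q ≤ p) : q ∣ oddProd p := by
  obtain ⟨i, rfl⟩ := hq
  exact dvd_prod_of_mem (fun i => 2 * i + 1) (mem_range.2 (by omega : i < p))

lemma HasLeastOddFactor.congr {p : ℕ} (hp : Odd p) {m m' : ℤ}
    (hmod : m ≡ m' [ZMOD oddProd p]) (h : HasLeastOddFactor p m) : HasLeastOddFactor p m' := by
  have key : ∀ q : ℕ, Odd q → q ≤ p → ((q : ℤ) ∣ m ↔ (q : ℤ) ∣ m') := fun q hq hqp =>
    (hmod.of_dvd (Int.natCast_dvd_natCast.2 (dvd_oddProd hq hqp))).dvd_iff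
  exact ⟨(key p hp le_rfl).1 h.1, fun q h3 hq ho hd => h.2 q h3 hq ho ((key q ho hq.le).2 hd)⟩

lemma val_neg_one_sub_modEq {Q : ℕ} [NeZero Q] (x : ZMod Q) :
    ((-1 - x).val : ℤ) ≡ -1 - x.val [ZMOD Q] := by
  rw [← ZMod.intCast_eq_intCast_iff]
  push_cast
  rw [ZMod.natCast_zmod_val, ZMod.natCast_zmod_val]

open Classical Asymptotics in
lemma exists_isLittleO_sum_minFac_sub {p : ℕ} (hp : p.Prime) (hp5 : 5 ≤ p) :
    ∃ c : ℝ, 0 < c ∧ (fun N : ℕ => (∑ k ∈ range N,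
        if (2 * k + 1).minFac = p then (thueMorse k : ℝ) else 0)
        - c * (∑ k ∈ range N, thueMorse k + newmanSum N : ℤ))
      =o[atTop] fun N : ℕ => (N : ℝ) ^ newmanExponent := by
  have hpodd : Odd p := hp.odd_of_ne_two (by omega)
  set Q := oddProd p with hQ
  have h3Q : 3 ∣ Q := dvd_oddProd (by decide) (by omega)
  set g : ZMod Q → ℝ := fun x => if HasLeastOddFactor p (2 * x.val + 1) then 1 else 0 with hg
  set h : ZMod Q → ℝ := fun x => if x.val % 3 = 1 then 0 else 1 with hh
  have hg0 : ∀ x, 0 ≤ g x := fun x => by simp only [hg]; split_ifs <;> norm_num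
  have hh0 : ∀ x, 0 ≤ h x := fun x => by simp only [hh]; split_ifs <;> norm_num
  have hgk : ∀ k : ℕ, g k = if (2 * k + 1).minFac = p then 1 else 0 := fun k => by
    have hk : (2 * ((k : ZMod Q).val : ℤ) + 1) ≡ 2 * k + 1 [ZMOD Q] := by
      rw [ZMod.val_natCast]
      push_cast
      exact ((Int.mod_modEq _ _).mul_left 2).add_right 1
    simp only [hg, minFac_two_mul_add_one_eq_iff hp hp5]
    exact if_congr ⟨.congr hpodd hk, .congr hpodd hk.symm⟩ rfl rfl
  have hhk : ∀ k : ℕ, h k = if k % 3 = 1 then 0 else 1 := fun k => by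
    simp only [hh, ZMod.val_natCast, Nat.mod_mod_of_dvd _ h3Q]
  have hgsymm : ∀ x, g (-1 - x) = g x := fun x => by
    have hx : 2 * ((-1 - x).val : ℤ) + 1 ≡ -(2 * x.val + 1) [ZMOD Q] := by
      have := ((val_neg_one_sub_modEq x).mul_left 2).add_right 1
      rwa [show 2 * (-1 - (x.val : ℤ)) + 1 = -(2 * x.val + 1) by ring] at this
    refine if_congr ⟨fun hm => ?_, fun hm => .congr hpodd hx.symm hm.neg⟩ rfl rfl
    simpa using (HasLeastOddFactor.congr hpodd hx hm).neg
  have hhsymm : ∀ x, h (-1 - x) = h x := fun x => by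
    have hx : ((-1 - x).val : ℤ) ≡ -1 - x.val [ZMOD (3 : ℕ)] :=
      (val_neg_one_sub_modEq x).of_dvd (Int.natCast_dvd_natCast.2 h3Q)
    refine if_congr ?_ rfl rfl
    rw [Int.ModEq] at hx
    omega
  have hgh : ∀ x, x.val % 3 = 1 → g x = 0 := fun x hx => by
    refine if_neg fun hm => hm.2 3 le_rfl (by omega) (by decide) ?_
    omega
  have hgpos : 0 < ∑ x, g x := by
    refine sum_pos' (fun x _ => hg0 x) ⟨((p / 2 : ℕ) : ZMod Q), mem_univ _, ?_⟩
    rw [hgk, if_pos]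
    · norm_num
    · obtain ⟨a, ha⟩ := hpodd
      rw [show 2 * (p / 2) + 1 = p by omega, hp.minFac_eq]
  have hhpos : 0 < ∑ x, h x :=
    sum_pos' (fun x _ => hh0 x) ⟨((0 : ℕ) : ZMod Q), mem_univ _, by rw [hhk]; norm_num⟩
  refine ⟨(∑ x, g x) / ∑ x, h x, div_pos hgpos hhpos, ?_⟩
  set c := (∑ x, g x) / ∑ x, h x with hc
  have hlit := sum_thueMorse_mul_isLittleO (odd_oddProd p) (f := fun x => ((g x - c * h x : ℝ) : ℂ))
    (fun x => by simp only [hgsymm, hhsymm])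
    (fun x hx => by simp [hgh x hx, hh, hx])
    (by rw [← Complex.ofReal_sum, sum_sub_distrib, ← mul_sum, hc,
          div_mul_cancel₀ _ hhpos.ne', sub_self, Complex.ofReal_zero])
  refine IsLittleO.of_norm_left (hlit.norm_left.congr_left fun N => ?_)
  have hsum : ∑ n ∈ range N, (thueMorse n : ℂ) * ((g n - c * h n : ℝ) : ℂ) =
      ((∑ n ∈ range N, (thueMorse n : ℝ) * (g n - c * h n) : ℝ) : ℂ) := by
    push_cast
    rfl
  rw [hsum, Complex.norm_real, newmanSum, ← sub_eq_add_neg, ← sum_sub_distrib]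
  push_cast
  rw [mul_sum, ← sum_sub_distrib]
  congr 1
  refine sum_congr rfl fun k _ => ?_
  rw [hgk, hhk]
  split_ifs <;> simp <;> ring

lemma neg_sum_V_eq {p : ℕ} (hp5 : 5 ≤ p) (n : ℕ) :
    -(∑ j ∈ V p n, (-1 : ℝ) ^ s j) = ∑ k ∈ range ((n + 1) / 2),
      if (2 * k + 1).minFac = p then (thueMorse k : ℝ) else 0 := by
  rw [← sum_neg_distrib, ← sum_filter, V]
  have hodd : ∀ j, j.minFac = p → j % 2 = 1 := fun j hj => by
    by_contra h
    have := Nat.minFac_le_of_dvd le_rfl (Nat.dvd_of_mod_eq_zero (by omega : j % 2 = 0))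
    omega
  refine sum_nbij' (fun j => j / 2) (fun k => 2 * k + 1) ?_ ?_ ?_ ?_ ?_
  · intro j hj
    rw [mem_filter, mem_Icc] at hj
    have := hodd j hj.2
    rw [mem_filter, mem_range, show 2 * (j / 2) + 1 = j by omega]
    exact ⟨by omega, hj.2⟩
  · intro k hk
    rw [mem_filter, mem_range] at hk
    rw [mem_filter, mem_Icc]
    exact ⟨by omega, hk.2⟩
  · intro j hj
    have := hodd j (mem_filter.1 hj).2
    omega
  · intro k _
    omega
  · intro j hj
    have := hodd j (mem_filter.1 hj).2
    have h2 : s j = s (j / 2) + 1 := by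
      rw [← s_two_mul_add_one, show 2 * (j / 2) + 1 = j by omega]
    rw [h2, pow_succ, thueMorse]
    push_cast
    ring

lemma tendsto_log_div_log_of_rpow_bounds {f : ℕ → ℝ} {a b' e : ℝ} (ha : 0 < a)
    (hlow : ∀ᶠ n : ℕ in atTop, a * (n : ℝ) ^ e ≤ f n)
    (hup : ∀ᶠ n : ℕ in atTop, f n ≤ b' * (n : ℝ) ^ e) :
    Tendsto (fun n : ℕ => Real.log (f n) / Real.log n) atTop (𝓝 e) := by
  have hlog : Tendsto (fun n : ℕ => Real.log n) atTop atTop :=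
    Real.tendsto_log_atTop.comp tendsto_natCast_atTop_atTop
  have hlim : ∀ d : ℝ, Tendsto (fun n : ℕ => Real.log d / Real.log n + e) atTop (𝓝 e) :=
    fun d => by simpa using (hlog.const_div_atTop (Real.log d)).add_const e
  have hsplit : ∀ d : ℝ, 0 < d → ∀ n : ℕ, 1 < n →
      Real.log (d * (n : ℝ) ^ e) / Real.log n = Real.log d / Real.log n + e := by
    intro d hd n hn
    have hn1 : (1 : ℝ) < n := by exact_mod_cast hn
    have hn0 : (0 : ℝ) < n := by linarith
    have := (Real.log_pos hn1).ne'
    rw [Real.log_mul hd.ne' (by positivity), Real.log_rpow hn0]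
    field_simp
  refine tendsto_of_tendsto_of_tendsto_of_le_of_le' (hlim a) (hlim b') ?_ ?_
  · filter_upwards [hlow, eventually_gt_atTop 1] with n hl hn
    have hn1 : (1 : ℝ) < n := by exact_mod_cast hn
    have := (Real.log_pos hn1).le
    rw [← hsplit a ha n hn]
    gcongr
  · filter_upwards [hlow, hup, eventually_gt_atTop 1] with n hl hu hn
    have hn1 : (1 : ℝ) < n := by exact_mod_cast hn
    have := (Real.log_pos hn1).le
    have hpow : (0 : ℝ) < (n : ℝ) ^ e := by positivity
    have hf : 0 < f n := (mul_pos ha hpow).trans_le hl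
    have hb : 0 < b' := pos_of_mul_pos_left (hf.trans_le hu) hpow.le
    rw [← hsplit b' hb n hn]
    gcongr

theorem stmt_15 (p : ℕ) (hp : p.Prime) (hp5 : 5 ≤ p) :
    Tendsto (fun n : ℕ => Real.log (-(∑ j ∈ V p n, (-1 : ℝ) ^ (s j))) / Real.log n)
      atTop (𝓝 (Real.log 3 / Real.log 4)) := by
  simp only [neg_sum_V_eq hp5]
  obtain ⟨c, hc, hlit⟩ := exists_isLittleO_sum_minFac_sub hp hp5
  obtain ⟨d, hd, hnew⟩ := exists_mul_rpow_le_newmanSum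
  have hpos := newmanExponent_pos.le
  have hhalf : Tendsto (fun n : ℕ => (n + 1) / 2) atTop atTop :=
    (Nat.tendsto_div_const_atTop two_ne_zero).comp (tendsto_add_atTop_nat 1)
  have hev := hhalf.eventually ((hlit.bound (show 0 < c * d / 2 by positivity)).and
    (eventually_ge_atTop 5))
  refine tendsto_log_div_log_of_rpow_bounds (a := c * d / 2 * (1 / 2) ^ newmanExponent)
    (b' := 2 * c + c * d / 2) (e := newmanExponent) (by positivity) ?_ ?_
  · filter_upwards [hev] with n ⟨hn, hn5⟩
    set N := (n + 1) / 2 with hN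
    rw [Real.norm_eq_abs, Real.norm_of_nonneg (by positivity), Int.cast_add] at hn
    have h1 := (abs_le.1 hn).1
    have h2 : (-1 : ℝ) ≤ (∑ k ∈ range N, thueMorse k : ℤ) := by
      exact_mod_cast (abs_le.1 (abs_sum_range_thueMorse_le N)).1
    have h3 : (1 / 2 : ℝ) ^ newmanExponent * (n : ℝ) ^ newmanExponent
        ≤ (N : ℝ) ^ newmanExponent := by
      rw [← Real.mul_rpow (by positivity) (by positivity)]
      gcongr
      have : (n : ℝ) ≤ 2 * N := by exact_mod_cast (by omega : n ≤ 2 * N)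
      linarith
    have h4 := mul_le_mul_of_nonneg_left h3 (show 0 ≤ c * d / 2 by positivity)
    have h5 := mul_le_mul_of_nonneg_left (hnew N hn5) hc.le
    have h6 := mul_le_mul_of_nonneg_left h2 hc.le
    linarith
  · filter_upwards [hev] with n ⟨hn, hn5⟩
    set N := (n + 1) / 2 with hN
    rw [Real.norm_eq_abs, Real.norm_of_nonneg (by positivity), Int.cast_add] at hn
    have h1 := (abs_le.1 hn).2
    have h2 : ((∑ k ∈ range N, thueMorse k : ℤ) : ℝ) ≤ 1 := by
      exact_mod_cast (abs_le.1 (abs_sum_range_thueMorse_le N)).2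
    have h3 : (N : ℝ) ^ newmanExponent ≤ (n : ℝ) ^ newmanExponent := by
      gcongr
      omega
    have h4 := mul_le_mul_of_nonneg_left h3 (show 0 ≤ 2 * c + c * d / 2 by positivity)
    have h5 := mul_le_mul_of_nonneg_left (newmanSum_add_one_le (by omega : 1 ≤ N)) hc.le
    have h6 := mul_le_mul_of_nonneg_left h2 hc.le
    linarith
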